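/- arXiv:1002.1383 — 2 statements merged into one kernel-verified Lean document; each statement's English description precedes it below -/
import Mathlib

section
/- For every natural number k ≥ 1, the positive integer lcm(1, 2, …, k) is a period of the function g_k; that is, g_k(n + lcm(1, …, k)) = g_k(n) for every positive integer n, where g_k(n) := n(n+1)⋯(n+k) / lcm(n, n+1, …, n+k). -/
/-- `rangeLcm a b` is `lcm(a, a+1, …, b)`. -/
def rangeLcm (a b : ℕ) : ℕ := (Finset.Icc a b).lcm id

/-- Farhi's arithmetic function `g_k(n) = n(n+1)⋯(n+k) / lcm(n, n+1, …, n+k)`. -/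
def farhiG (k n : ℕ) : ℕ := (∏ i ∈ Finset.Icc n (n + k), i) / rangeLcm n (n + k)

lemma aux_distrib (a b c : ℕ) (ha : a ≠ 0) (hb : b ≠ 0) (hc : c ≠ 0) :
    Nat.gcd a (Nat.lcm b c) ∣ Nat.lcm (Nat.gcd a b) (Nat.gcd a c) := by
  have h1 : Nat.gcd a b ≠ 0 := Nat.gcd_ne_zero_left ha
  have h2 : Nat.gcd a c ≠ 0 := Nat.gcd_ne_zero_left ha
  have h3 : Nat.lcm b c ≠ 0 := Nat.lcm_ne_zero hb hc
  rw [← Nat.factorization_le_iff_dvd (Nat.gcd_ne_zero_left ha) (Nat.lcm_ne_zero h1 h2),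
    Nat.factorization_gcd ha h3, Nat.factorization_lcm hb hc, Nat.factorization_lcm h1 h2,
    Nat.factorization_gcd ha hb, Nat.factorization_gcd ha hc]
  intro p
  simp only [Finsupp.inf_apply, Finsupp.sup_apply]
  exact (inf_sup_left _ _ _).le

lemma aux_gcd_lcm_dvd (S : Finset ℕ) (f : ℕ → ℕ) (hf : ∀ i, f i ≠ 0) (a m : ℕ) (ha : a ≠ 0)
    (h : ∀ i ∈ S, Nat.gcd a (f i) ∣ m) : Nat.gcd a (S.lcm f) ∣ m := by
  induction S using Finset.induction_on with
  | empty => simp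
  | insert b S hb ih =>
    rw [Finset.lcm_insert]
    refine (aux_distrib a (f b) (S.lcm f) ha (hf b) ?_).trans (Nat.lcm_dvd ?_ ?_)
    · exact Finset.lcm_ne_zero_iff.2 fun i _ => hf i
    · exact h b (Finset.mem_insert_self _ _)
    · exact ih fun i hi => h i (Finset.mem_insert_of_mem hi)

lemma aux_main (S : Finset ℕ) (f : ℕ → ℕ) (hf : ∀ i, f i ≠ 0) (L : ℕ)
    (h : ∀ i ∈ S, ∀ j ∈ S, i ≠ j → Nat.gcd (f i) (f j) ∣ L) :
    (∏ i ∈ S, f i) * S.lcm (fun i => Nat.gcd (f i) L) =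
      (∏ i ∈ S, Nat.gcd (f i) L) * S.lcm f := by
  induction S using Finset.induction_on with
  | empty => simp
  | insert b S hb ih =>
    have ih := ih fun i hi j hj => h i (Finset.mem_insert_of_mem hi) j (Finset.mem_insert_of_mem hj)
    rw [Finset.lcm_insert, Finset.lcm_insert, Finset.prod_insert hb, Finset.prod_insert hb]
    change _ * Nat.lcm _ _ = _ * Nat.lcm _ _
    set l := S.lcm f
    set l' := S.lcm (fun i => Nat.gcd (f i) L) with hl'
    have hg : Nat.gcd (f b) l = Nat.gcd (Nat.gcd (f b) L) l' := by
      apply Nat.dvd_antisymm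
      · apply aux_gcd_lcm_dvd S f hf _ _ (hf b)
        intro i hi
        have hL := h b (Finset.mem_insert_self _ _) i (Finset.mem_insert_of_mem hi)
          (fun e => hb (e ▸ hi))
        refine Nat.dvd_gcd (Nat.dvd_gcd (Nat.gcd_dvd_left _ _) hL) ?_
        exact (Nat.dvd_gcd (Nat.gcd_dvd_right _ _) hL).trans
          (Finset.dvd_lcm (f := fun i => Nat.gcd (f i) L) hi)
      · apply Nat.gcd_dvd_gcd_of_dvd_left _ (Nat.gcd_dvd_left _ _) |>.trans
        apply Nat.gcd_dvd_gcd_of_dvd_right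
        exact Finset.lcm_mono_fun fun i _ => Nat.gcd_dvd_left _ _
    have e1 := Nat.gcd_mul_lcm (f b) l
    have e2 := Nat.gcd_mul_lcm (Nat.gcd (f b) L) l'
    rw [← hg] at e2
    have hpos : 0 < Nat.gcd (f b) l := Nat.gcd_pos_of_pos_left _ (Nat.pos_of_ne_zero (hf b))
    apply Nat.eq_of_mul_eq_mul_left hpos
    calc _ = f b * (∏ i ∈ S, f i) * (Nat.gcd (f b) l * Nat.lcm (Nat.gcd (f b) L) l') := by ring
      _ = f b * Nat.gcd (f b) L * ((∏ i ∈ S, f i) * l') := by rw [e2]; ring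
      _ = Nat.gcd (f b) L * (∏ i ∈ S, Nat.gcd (f i) L) * (f b * l) := by rw [ih]; ring
      _ = _ := by rw [← e1]; ring

lemma aux_lcm_dvd_prod (S : Finset ℕ) (f : ℕ → ℕ) : S.lcm f ∣ ∏ i ∈ S, f i :=
  Finset.lcm_dvd fun _ hi => Finset.dvd_prod_of_mem f hi

lemma aux_farhi (k n : ℕ) (hn : 1 ≤ n) :
    farhiG k n = (∏ i ∈ Finset.range (k + 1), Nat.gcd (n + i) (rangeLcm 1 k)) /
      (Finset.range (k + 1)).lcm (fun i => Nat.gcd (n + i) (rangeLcm 1 k)) := by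
  have himg : Finset.Icc n (n + k) = (Finset.range (k + 1)).image (fun i => n + i) := by
    ext x
    simp only [Finset.mem_Icc, Finset.mem_image, Finset.mem_range]
    constructor
    · intro h
      exact ⟨x - n, by omega, by omega⟩
    · rintro ⟨i, hi, rfl⟩
      omega
  have hf : ∀ i, n + i ≠ 0 := fun i => by omega
  have key := aux_main (Finset.range (k + 1)) (fun i => n + i) hf (rangeLcm 1 k) (by
    have aux : ∀ i j, j < k + 1 → i < j → Nat.gcd (n + i) (n + j) ∣ rangeLcm 1 k := by
      intro i j hj hij
      have h1 : Nat.gcd (n + i) (n + j) ∣ j - i := by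
        have := Nat.dvd_sub (Nat.gcd_dvd_right (n + i) (n + j)) (Nat.gcd_dvd_left (n + i) (n + j))
        rwa [Nat.add_sub_add_left] at this
      exact h1.trans (Finset.dvd_lcm (f := id) (Finset.mem_Icc.2 ⟨by omega, by omega⟩))
    intro i hi j hj hij
    rw [Finset.mem_range] at hi hj
    rcases lt_or_gt_of_ne hij with h | h
    · exact aux i j hj h
    · rw [Nat.gcd_comm]
      exact aux j i hi h)
  have e : farhiG k n = (∏ i ∈ Finset.range (k + 1), (n + i)) /
      (Finset.range (k + 1)).lcm (fun i => n + i) := by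
    unfold farhiG
    rw [rangeLcm, himg, Finset.prod_image (by intro a _ b _ h; simpa using h), Finset.lcm_image]
    rfl
  rw [e]
  have p1 : 0 < (Finset.range (k + 1)).lcm (fun i => n + i) :=
    Nat.pos_of_ne_zero (Finset.lcm_ne_zero_iff.2 fun i _ => hf i)
  have p2 : 0 < (Finset.range (k + 1)).lcm (fun i => Nat.gcd (n + i) (rangeLcm 1 k)) :=
    Nat.pos_of_ne_zero (Finset.lcm_ne_zero_iff.2 fun i _ => Nat.gcd_ne_zero_left (hf i))
  obtain ⟨u, hu⟩ := aux_lcm_dvd_prod (Finset.range (k + 1)) (fun i => n + i)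
  obtain ⟨v, hv⟩ := aux_lcm_dvd_prod (Finset.range (k + 1))
    (fun i => Nat.gcd (n + i) (rangeLcm 1 k))
  rw [hu, hv] at key
  rw [hu, hv, Nat.mul_div_cancel_left _ p1, Nat.mul_div_cancel_left _ p2]
  apply Nat.eq_of_mul_eq_mul_left (Nat.mul_pos p1 p2)
  linarith

/-- For `k ≥ 1`, `lcm(1, 2, …, k)` is a period of `g_k`. -/
theorem rangeLcm_period_farhiG (k : ℕ) (hk : 1 ≤ k) (n : ℕ) (hn : 1 ≤ n) :
    farhiG k (n + rangeLcm 1 k) = farhiG k n := by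
  rw [aux_farhi k n hn, aux_farhi k _ (by omega)]
  have : ∀ i, Nat.gcd (n + rangeLcm 1 k + i) (rangeLcm 1 k) = Nat.gcd (n + i) (rangeLcm 1 k) := by
    intro i
    rw [Nat.add_right_comm, Nat.gcd_add_self_left]
  simp only [this]
end

section
/- For all natural numbers n ≥ k ≥ 0 and every prime p, the p-adic valuation of the binomial coefficient C(n, k) is at least the p-adic valuation of the lcm-binomial number [n, k]; that is, v_p(C(n, k)) ≥ v_p([n, k]). -/
/-- The lcm-binomial number `[n, k] = lcm(n, n-1, …, n-k+1) / lcm(1, 2, …, k)`. -/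
def lcmBinom (n k : ℕ) : ℕ := rangeLcm (n - k + 1) n / rangeLcm 1 k

lemma rangeLcm_ne_zero_aux (k : ℕ) : rangeLcm 1 k ≠ 0 := by
  unfold rangeLcm
  rw [Ne, Finset.lcm_eq_zero_iff]
  simp

lemma dvd_rangeLcm_aux {a b m : ℕ} (h1 : a ≤ m) (h2 : m ≤ b) : m ∣ rangeLcm a b :=
  Finset.dvd_lcm (f := id) (Finset.mem_Icc.2 ⟨h1, h2⟩)

lemma choose_mul_dvd_aux (k i : ℕ) (h0 : 0 < i) (h : i ≤ k) :
    k.choose i * i ∣ rangeLcm 1 k := by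
  have hc : k.choose i ≠ 0 := (Nat.choose_pos h).ne'
  rw [← Nat.factorization_prime_le_iff_dvd (mul_ne_zero hc h0.ne') (rangeLcm_ne_zero_aux k)]
  intro p hp
  have hlog : Nat.log p k ≤ (rangeLcm 1 k).factorization p := by
    rw [← hp.pow_dvd_iff_le_factorization (rangeLcm_ne_zero_aux k)]
    exact dvd_rangeLcm_aux (Nat.one_le_pow _ _ hp.pos) (Nat.pow_log_le_self p (by omega))
  have hi : i.factorization p ≤ Nat.log p k := by
    apply Nat.le_log_of_pow_le hp.one_lt
    exact (Nat.le_of_dvd h0 (Nat.ordProj_dvd i p)).trans h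
  have hle : (k.choose i).factorization p ≤ Nat.log p k - i.factorization p := by
    rw [Nat.factorization_choose hp h (Nat.lt_succ_self _), ← Nat.card_Ioc (i.factorization p)]
    apply Finset.card_le_card
    intro e he
    simp only [Finset.mem_filter, Finset.mem_Ico, Finset.mem_Ioc] at he ⊢
    refine ⟨?_, by omega⟩
    by_contra hlt
    have hd : p ^ e ∣ i := (hp.pow_dvd_iff_le_factorization h0.ne').2 (by omega)
    have := Nat.mod_eq_zero_of_dvd hd
    have := Nat.mod_lt (k - i) (pow_pos hp.pos e)
    omega
  rw [Nat.factorization_mul hc h0.ne', Finsupp.add_apply]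
  omega

/-- For `n ≥ k` and every prime `p`, `v_p(C(n, k)) ≥ v_p([n, k])`. -/
theorem factorization_lcmBinom_le_choose (n k p : ℕ) (h : k ≤ n) (hp : p.Prime) :
    (lcmBinom n k).factorization p ≤ (n.choose k).factorization p := by
  have h1 : rangeLcm 1 k ∣ rangeLcm (n - k + 1) n := by
    apply Finset.lcm_dvd
    intro i hi
    rw [Finset.mem_Icc] at hi
    have h3 := Nat.div_add_mod n i
    have h4 := Nat.mod_lt n (show i > 0 by omega)
    exact (Dvd.intro _ rfl : i ∣ i * (n / i)).trans (dvd_rangeLcm_aux (by omega) (by omega))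
  have h2 : rangeLcm (n - k + 1) n ∣ rangeLcm 1 k * n.choose k := by
    apply Finset.lcm_dvd
    intro m hm
    rw [Finset.mem_Icc] at hm
    obtain ⟨i, rfl⟩ : ∃ i, m = n - k + (i + 1) := ⟨m - (n - k) - 1, by omega⟩
    have hik : i + 1 ≤ k := by omega
    refine Dvd.dvd.trans ?_ (mul_dvd_mul_right (choose_mul_dvd_aux k (i + 1) (by omega) hik) _)
    have e1 := Nat.choose_mul (n := n) (show k - (i + 1) ≤ k by omega)
    rw [Nat.choose_symm hik, show k - (k - (i+1)) = i + 1 by omega,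
      show n - (k - (i+1)) = n - k + i + 1 by omega] at e1
    have e2 := Nat.add_one_mul_choose_eq (n - k + i) i
    refine ⟨n.choose (k - (i+1)) * (n - k + i).choose i, ?_⟩
    simp only [id]
    calc k.choose (i+1) * (i+1) * n.choose k = (n.choose k * k.choose (i+1)) * (i+1) := by ring
      _ = n.choose (k - (i+1)) * ((n - k + i + 1).choose (i+1) * (i+1)) := by rw [e1]; ring
      _ = _ := by rw [← e2]; ring
  have h3 : lcmBinom n k ∣ n.choose k := (Nat.div_dvd_iff_dvd_mul h1 (Nat.pos_of_ne_zero (rangeLcm_ne_zero_aux k))).2 h2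
  have hc : n.choose k ≠ 0 := (Nat.choose_pos h).ne'
  exact (Nat.factorization_le_iff_dvd (ne_zero_of_dvd_ne_zero hc h3) hc).2 h3 p
end
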